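/- arXiv:2111.04066 — 2 statements merged into one kernel-verified Lean document; each statement's English description precedes it below -/
import Mathlib

section
/- Let d>1 and λ>0 be constants with λ<λ_c(d). Let χ∈(1,2) be defined by 1/χ = 1 − ((d−1)/2)·log(1+1/(d−1)), set a = χ/(χ−1), and let Φ(y)=1/√(y(1+y)) for y>0. Then there exists a constant κ with 0<κ<1/d such that for every integer k≥1 and all positive reals x_1,…,x_k, setting x = λ·∏_{i=1}^k 1/(1+x_i), it holds that (Φ(x))^a · Σ_{i=1}^k ( x/((1+x_i)·Φ(x_i)) )^a ≤ κ^{a/χ}. -/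
/-!
Put `s = a / 2`, `p i = x i / (1 + x i)` and `t i = log (1 + x i)`, let `T = ∑ t i`, and let `X` be
the value `lam * exp (-T)` of the recursion. The left-hand side equals
`(X / (1 + X)) ^ s * ∑ (p i) ^ s`, and the hypothesis on `χ` reads `s = 1 / ((d - 1) * L)` with
`L = log (1 + 1 / (d - 1))`. Two tangent-line bounds, both sharp at the fixed point
`x i = X = 1 / (d - 1)`, `T = d * L` of the critical recursion, separate the variables.

* `rpow_le_neg_log`: `p ^ s ≤ (1 / d) ^ s / L * (-log (1 - p))`, hence
  `∑ (p i) ^ s ≤ (1 / d) ^ s / L * T`, whatever the number of children. This is Jensen's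
  inequality for the power series of `-log (1 - p)`.
* `rpow_mul_le`: `(X / (1 + X)) ^ s * T ≤ (1 / d) ^ s * (d * L) * (lam / lamc d) ^ (1 / (d * L))`,
  from weighted AM-GM for `1 + 1 / X` and from `T / T₀ ≤ exp (T / T₀ - 1)` with `T₀ = d * L`; the
  linear terms in `T` cancel because of the value of `s`.

Multiplying, the left-hand side is at most
`(1 / d) ^ (a - 1) * (lam / lamc d) ^ (1 / (d * L))`. Since `a / χ = a - 1` and `lam < lamc d`, this
is `κ ^ (a / χ)` for some `κ < 1 / d`.
-/

open Classical Filter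

/-- A configuration `σ : V → Bool` is the indicator of an independent set of `G`. -/
def IsIndepConf {V : Type*} (G : SimpleGraph V) (σ : V → Bool) : Prop :=
  ∀ u v, G.Adj u v → ¬(σ u = true ∧ σ v = true)

/-- Weight `λ^{|σ|}` of an independent-set configuration (and `0` otherwise). -/
noncomputable def hcWeight {V : Type*} [Fintype V] (G : SimpleGraph V) (lam : ℝ)
    (σ : V → Bool) : ℝ :=
  if IsIndepConf G σ then lam ^ (Finset.univ.filter (fun v => σ v = true)).card else 0

/-- The hard-core distribution `μ_{G,λ}` on configurations `V → Bool`. -/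
noncomputable def hardCore {V : Type*} [Fintype V] (G : SimpleGraph V) (lam : ℝ) :
    (V → Bool) → ℝ :=
  fun σ => hcWeight G lam σ / ∑ σ' : V → Bool, hcWeight G lam σ'

/-- `λ_c(d) = d^d/(d-1)^{d+1}` (relevant for `d > 1`). -/
noncomputable def lamc (d : ℝ) : ℝ := d ^ d / (d - 1) ^ (d + 1)

/-- `Φ(y) = 1/√(y(1+y))`. -/
noncomputable def PhiHC (y : ℝ) : ℝ := 1 / Real.sqrt (y * (1 + y))

/-- Jensen's inequality for `-log (1 - p) = ∑ p ^ (n + 1) / (n + 1)`: the weights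
`(1 / d) ^ (n + 1) / ((n + 1) * L)` have total mass `1`, and `s = 1 / ((d - 1) * L)` is the mean of
`n + 1` under them. Equality holds at `p = 1 / d`. -/
theorem rpow_le_neg_log {d L s p : ℝ} (hd : 1 < d) (hL : L = Real.log (1 + 1 / (d - 1)))
    (hLpos : 0 < L) (hs : s = 1 / ((d - 1) * L)) (hp0 : 0 < p) (hp1 : p < 1) :
    p ^ s ≤ (1 / d) ^ s / L * (-Real.log (1 - p)) := by
  have hd0 : 0 < d := by linarith
  have hd1 : 0 < d - 1 := by linarith
  have hdi : 1 / d < 1 := by rw [div_lt_one hd0]; exact hd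
  have hdi0 : 0 < 1 / d := by positivity
  have h1 := Real.hasSum_pow_div_log_of_abs_lt_one (x := p) (by rw [abs_of_pos hp0]; exact hp1)
  have h2 := Real.hasSum_pow_div_log_of_abs_lt_one (x := 1 / d)
    (by rw [abs_of_pos hdi0]; exact hdi)
  have h2L : -Real.log (1 - 1 / d) = L := by
    rw [hL, ← Real.log_inv]
    congr 1
    field_simp
    ring
  rw [h2L] at h2
  have h3 : HasSum (fun n : ℕ => (1 / d) ^ (n + 1)) (1 / (d - 1)) := by
    have := (hasSum_geometric_of_lt_one hdi0.le hdi).mul_left (1 / d)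
    rw [show 1 / (d - 1) = 1 / d * (1 - 1 / d)⁻¹ by field_simp]
    simpa only [pow_succ'] using this
  have hr : 0 < p * d := by positivity
  have hrs : 0 < (p * d) ^ s := Real.rpow_pos_of_pos hr s
  have h4 := ((h2.mul_left ((p * d) ^ s * (1 - s * Real.log (p * d)))).add
    (h3.mul_left ((p * d) ^ s * Real.log (p * d))))
  have key := hasSum_le (fun n => ?_) h4 h1
  · have hsL : s * L = 1 / (d - 1) := by rw [hs]; field_simp
    have h5 : (p * d) ^ s * L ≤ -Real.log (1 - p) := by
      have : (p * d) ^ s * (1 - s * Real.log (p * d)) * L +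
          (p * d) ^ s * Real.log (p * d) * (1 / (d - 1)) = (p * d) ^ s * L := by
        rw [← hsL]; ring
      linarith
    have h6 : p ^ s = (1 / d) ^ s / L * ((p * d) ^ s * L) := by
      have : (1 / d) ^ s * (p * d) ^ s = p ^ s := by
        rw [← Real.mul_rpow hdi0.le hr.le]
        congr 1
        field_simp
      rw [← this]
      field_simp
    rw [h6]
    exact mul_le_mul_of_nonneg_left h5 (by positivity)
  · -- The tangent bound `r ^ (n + 1) ≥ r ^ s * (1 + (n + 1 - s) * log r)` at `r = p * d`.
    have hw : 0 ≤ (1 / d) ^ (n + 1) / ((n : ℝ) + 1) := by positivity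
    have htan : (p * d) ^ s * (1 + ((n : ℝ) + 1 - s) * Real.log (p * d)) ≤ (p * d) ^ (n + 1) := by
      have e : (p * d) ^ (n + 1) =
          (p * d) ^ s * Real.exp (((n : ℝ) + 1 - s) * Real.log (p * d)) := by
        rw [← Real.rpow_natCast, Real.rpow_def_of_pos hr, Real.rpow_def_of_pos hr, ← Real.exp_add]
        congr 1
        push_cast
        ring
      rw [e]
      apply mul_le_mul_of_nonneg_left _ hrs.le
      linarith [Real.add_one_le_exp (((n : ℝ) + 1 - s) * Real.log (p * d))]
    have h7 := mul_le_mul_of_nonneg_left htan hw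
    have e1 : (1 / d) ^ (n + 1) / ((n : ℝ) + 1) * (p * d) ^ (n + 1) =
        p ^ (n + 1) / ((n : ℝ) + 1) := by
      rw [div_mul_eq_mul_div, ← mul_pow]
      congr 2
      field_simp
    rw [e1] at h7
    refine le_trans (le_of_eq ?_) h7
    have hn : (n : ℝ) + 1 ≠ 0 := by positivity
    field_simp
    ring

theorem lamc_eq {d L : ℝ} (hd : 1 < d) (hL : L = Real.log (1 + 1 / (d - 1))) :
    lamc d = Real.exp (d * L) / (d - 1) := by
  have hd1 : 0 < d - 1 := by linarith
  have e : 1 + 1 / (d - 1) = d / (d - 1) := by field_simp; ring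
  rw [hL, e, mul_comm, ← Real.rpow_def_of_pos (by positivity), lamc,
    Real.div_rpow (by linarith) hd1.le, Real.rpow_add hd1, Real.rpow_one, div_div]

/-- The bound on the parent's factor, in terms of `T = ∑ log (1 + x i)`; for `lam = lamc d` equality
holds at `T = d * L`. -/
theorem rpow_mul_le {d L s lam T : ℝ} (hd : 1 < d) (hlam : 0 < lam)
    (hL : L = Real.log (1 + 1 / (d - 1))) (hLpos : 0 < L) (hs : s = 1 / ((d - 1) * L)) :
    (lam * Real.exp (-T) / (1 + lam * Real.exp (-T))) ^ s * T ≤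
      (1 / d) ^ s * (d * L) * Real.exp (-(Real.log (lamc d / lam) / (d * L))) := by
  have hd0 : 0 < d := by linarith
  have hd1 : 0 < d - 1 := by linarith
  have hs0 : 0 < s := by rw [hs]; positivity
  have hc : 0 < lamc d := by rw [lamc_eq hd hL]; positivity
  -- `exp u` is the ratio of `1 / X` to its value `d - 1` at the critical fixed point.
  set u := T - d * L + Real.log (lamc d / lam) with hu
  have hX : lam * Real.exp (-T) = 1 / ((d - 1) * Real.exp u) := by
    rw [hu, Real.exp_add, Real.exp_log (by positivity), lamc_eq hd hL, Real.exp_sub, Real.exp_neg]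
    field_simp
  have hamgm : d * Real.exp ((d - 1) / d * u) ≤ 1 + (d - 1) * Real.exp u := by
    have h := convexOn_exp.2 (Set.mem_univ (0 : ℝ)) (Set.mem_univ u)
      (show 0 ≤ 1 / d by positivity) (show 0 ≤ (d - 1) / d by positivity) (by field_simp; ring)
    simp only [smul_eq_mul, mul_zero, zero_add, Real.exp_zero, mul_one] at h
    calc d * Real.exp ((d - 1) / d * u) ≤ d * (1 / d + (d - 1) / d * Real.exp u) :=
          mul_le_mul_of_nonneg_left h hd0.le
      _ = _ := by field_simp
  have hq : lam * Real.exp (-T) / (1 + lam * Real.exp (-T)) ≤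
      1 / d * Real.exp (-((d - 1) / d * u)) := by
    have e : lam * Real.exp (-T) / (1 + lam * Real.exp (-T)) = 1 / (1 + (d - 1) * Real.exp u) := by
      rw [hX]; field_simp; ring
    have e2 : 1 / d * Real.exp (-((d - 1) / d * u)) = 1 / (d * Real.exp ((d - 1) / d * u)) := by
      rw [Real.exp_neg]; field_simp
    rw [e, e2]
    exact one_div_le_one_div_of_le (by positivity) hamgm
  have hqs : (lam * Real.exp (-T) / (1 + lam * Real.exp (-T))) ^ s ≤
      (1 / d) ^ s * Real.exp (-(u / (d * L))) := by
    refine (Real.rpow_le_rpow (by positivity) hq hs0.le).trans (le_of_eq ?_)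
    rw [Real.mul_rpow (by positivity) (by positivity), ← Real.exp_mul]
    congr 2
    rw [hs]
    field_simp
  have hT : T ≤ d * L * Real.exp (T / (d * L) - 1) := by
    have h := Real.add_one_le_exp (T / (d * L) - 1)
    calc T = d * L * (T / (d * L) - 1 + 1) := by field_simp; ring
      _ ≤ _ := mul_le_mul_of_nonneg_left h (by positivity)
  calc _ ≤ (lam * Real.exp (-T) / (1 + lam * Real.exp (-T))) ^ s *
        (d * L * Real.exp (T / (d * L) - 1)) := mul_le_mul_of_nonneg_left hT (by positivity)
    _ ≤ (1 / d) ^ s * Real.exp (-(u / (d * L))) * (d * L * Real.exp (T / (d * L) - 1)) :=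
        mul_le_mul_of_nonneg_right hqs (by positivity)
    _ = (1 / d) ^ s * (d * L) * (Real.exp (-(u / (d * L))) * Real.exp (T / (d * L) - 1)) := by ring
    _ = _ := by
        rw [← Real.exp_add]
        congr 2
        rw [hu]
        field_simp
        ring

theorem PhiHC_mul {X y : ℝ} (hX : 0 < X) (hy : 0 < y) :
    PhiHC X * (X / ((1 + y) * PhiHC y)) = Real.sqrt (X / (1 + X) * (y / (1 + y))) := by
  symm
  rw [Real.sqrt_eq_iff_mul_self_eq (by positivity) (by unfold PhiHC; positivity), ← pow_two]
  unfold PhiHC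
  simp only [mul_pow, div_pow]
  rw [Real.sq_sqrt (by positivity), Real.sq_sqrt (by positivity)]
  field_simp

/-- the key contraction inequality for the hard-core tree recursion
(Lemma from [ConnConnPaper]). -/
theorem stmt0 (d lam χ a : ℝ) (hd : 1 < d) (hlam : 0 < lam) (hcrit : lam < lamc d)
    (hχ1 : 1 < χ) (hχ2 : χ < 2)
    (hχdef : 1 / χ = 1 - (d - 1) / 2 * Real.log (1 + 1 / (d - 1)))
    (hadef : a = χ / (χ - 1)) :
    ∃ κ : ℝ, 0 < κ ∧ κ < 1 / d ∧
      ∀ k : ℕ, 1 ≤ k → ∀ x : Fin k → ℝ, (∀ i, 0 < x i) →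
        PhiHC (lam * ∏ i, 1 / (1 + x i)) ^ a *
            ∑ i, ((lam * ∏ j, 1 / (1 + x j)) / ((1 + x i) * PhiHC (x i))) ^ a
          ≤ κ ^ (a / χ) := by
  have hd0 : 0 < d := by linarith
  have hd1 : 0 < d - 1 := by linarith
  obtain ⟨L, hL⟩ : ∃ L, L = Real.log (1 + 1 / (d - 1)) := ⟨_, rfl⟩
  have hLpos : 0 < L := by
    rw [hL]
    exact Real.log_pos (by linarith [show 0 < 1 / (d - 1) by positivity])
  rw [← hL] at hχdef
  have hχ : 0 < χ - 1 := by linarith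
  have haχ : a / χ = a - 1 := by rw [hadef]; field_simp; ring
  have ha1 : 0 < a - 1 := by rw [← haχ, hadef]; positivity
  have hs : a / 2 = 1 / ((d - 1) * L) := by
    have h : (d - 1) * L = 2 * (1 - 1 / χ) := by rw [hχdef]; ring
    rw [h, hadef]
    field_simp
  have hρ : 0 < Real.log (lamc d / lam) := Real.log_pos ((one_lt_div hlam).2 hcrit)
  have hE : 0 < Real.log (lamc d / lam) / (d * L) / (a - 1) := by positivity
  refine ⟨1 / d * Real.exp (-(Real.log (lamc d / lam) / (d * L) / (a - 1))), by positivity, ?_, ?_⟩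
  · exact mul_lt_of_lt_one_right (by positivity) (Real.exp_lt_one_iff.2 (by linarith))
  intro k _ x hx
  set T := ∑ i, Real.log (1 + x i) with hT
  have hprod : ∏ i, 1 / (1 + x i) = Real.exp (-T) := by
    rw [hT, ← Finset.sum_neg_distrib, Real.exp_sum]
    refine Finset.prod_congr rfl fun i _ => ?_
    have := hx i
    rw [Real.exp_neg, Real.exp_log (by positivity), one_div]
  rw [hprod]
  have hX : 0 < lam * Real.exp (-T) := by positivity
  generalize hXd : lam * Real.exp (-T) = X at hX ⊢
  have hterm : ∀ i, PhiHC X ^ a * (X / ((1 + x i) * PhiHC (x i))) ^ a ≤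
      (X / (1 + X)) ^ (a / 2) * ((1 / d) ^ (a / 2) / L * Real.log (1 + x i)) := by
    intro i
    have hxi := hx i
    rw [← Real.mul_rpow (by unfold PhiHC; positivity) (by unfold PhiHC; positivity),
      PhiHC_mul hX hxi, Real.sqrt_eq_rpow, ← Real.rpow_mul (by positivity),
      show 1 / 2 * a = a / 2 by ring, Real.mul_rpow (by positivity) (by positivity)]
    apply mul_le_mul_of_nonneg_left _ (by positivity)
    have h := rpow_le_neg_log (p := x i / (1 + x i)) hd hL hLpos hs (by positivity)
      (by rw [div_lt_one (by positivity)]; linarith)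
    rwa [← Real.log_inv, show (1 - x i / (1 + x i))⁻¹ = 1 + x i by field_simp; ring] at h
  have hmain := rpow_mul_le (T := T) hd hlam hL hLpos hs
  rw [hXd] at hmain
  rw [Finset.mul_sum]
  calc _ ≤ ∑ i, (X / (1 + X)) ^ (a / 2) * ((1 / d) ^ (a / 2) / L * Real.log (1 + x i)) :=
        Finset.sum_le_sum fun i _ => hterm i
    _ = (1 / d) ^ (a / 2) / L * ((X / (1 + X)) ^ (a / 2) * T) := by
        rw [← Finset.mul_sum, ← Finset.mul_sum]; ring
    _ ≤ (1 / d) ^ (a / 2) / L * ((1 / d) ^ (a / 2) * (d * L) *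
          Real.exp (-(Real.log (lamc d / lam) / (d * L)))) :=
        mul_le_mul_of_nonneg_left hmain (by positivity)
    _ = ((1 / d) ^ (a / 2) * (1 / d) ^ (a / 2) * d) *
          Real.exp (-(Real.log (lamc d / lam) / (d * L))) := by field_simp
    _ = _ := by
        rw [haχ, Real.mul_rpow (by positivity) (by positivity), ← Real.exp_mul,
          ← Real.rpow_add (by positivity), add_halves, Real.rpow_sub_one (by positivity)]
        congr 1
        · field_simp
        · congr 1
          field_simp
end

section
/- Let d>1 and λ>0 be constants with λ<λ_c(d). Then there exists a constant χ>1 (depending only on d and λ) and, for each integer k≥1, a real W_k>0 (depending only on k, d, λ) such that the following holds. Let T=(V,E) be a finite tree rooted at ρ, suppose the d-branching value of ρ in T is at most α, and suppose ρ has exactly k children. Then for the hard-core distribution μ=μ_{T,λ}, for every S⊆V∖{ρ} and every τ∈{0,1}^S with μ(σ_S=τ)>0 and 0<μ_τ(σ_ρ=1)<1, one has Σ_{v∈V} |I^τ_T(ρ→v)| ≤ W_k · α^{1/χ}. -/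
/-!
Write `occ u` for the probability that `u` is occupied in the tree hanging below `u`. Given that
the root `u` is neither forced nor forbidden, its children are independent when `u` is empty, so
`occ u = λ P / (1 + λ P)` with `P = ∏ (1 - occ w)` over the children `w` (`occ_formula`), and the
total influence satisfies `J u = 1 + ∑ occ w * J w` (`totInf_formula`), because influences multiply
along edges. The branching value satisfies `B u = 1 + d⁻¹ ∑ B w`; only `≥` is needed
(`distBranching_split`).

The bound is proved for `√(occ u) * J u`, which corresponds to the potential
`1 / √(x (1 + x))` on ratios. Induction on the tree gives
`√(occ u) * J u ≤ C * B u ^ (1 / χ)` with `C = 1 / (1 - √r)`: by Hölder with exponents `2 b` and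
its conjugate `χ` (`holder_step`) it suffices that `∑ (occ u * occ w) ^ b ≤ r ^ b * d ^ (1 - 2 b)`
for some `b > 1` and `r < 1`, uniformly in the number of children (`contraction`).

For this contraction, put `t w = -log (1 - occ w)` and `T = ∑ t w`. The problem separates: bound
`occ w ^ b` by a constant times `t w`, and `occ u ^ b * T` by a constant. With
`b = 1 / ((d - 1) * log (d / (d - 1)))` both bounds are tight exactly at the critical fixed point
`occ = 1 / d`, `λ = λ_c(d)`, where their product is `d ^ (1 - 2 b)`; lowering `λ` below `λ_c(d)`
gains the factor `r ^ b`. Both bounds follow from tangent lines of `exp`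
(`rpow_le_neg_log`, `critical_bound`).

The factor `√(occ ρ)` at the root is bounded below in terms of `k` (`occ_lower`), which produces
the constant `W`.
-/

open Classical Filter

/-- The degree of a vertex. -/
noncomputable def deg {V : Type*} (G : SimpleGraph V) (v : V) : ℕ :=
  Nat.card {u : V // G.Adj v u}

/-- The probability of an event `A` under the (possibly unnormalised) distribution `μ`
on configurations `α → Bool`. -/
noncomputable def pr {α : Type*} [Fintype α] (μ : (α → Bool) → ℝ) (A : Set (α → Bool)) : ℝ :=
  ∑ σ : α → Bool, if σ ∈ A then μ σ else 0

/-- Conditional probability `μ(A | B)`. -/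
noncomputable def cpr {α : Type*} [Fintype α] (μ : (α → Bool) → ℝ) (A B : Set (α → Bool)) : ℝ :=
  pr μ (A ∩ B) / pr μ B

/-- The event that the configuration agrees with `τ` on `S`. -/
def eventEq {α : Type*} (S : Set α) (τ : α → Bool) : Set (α → Bool) := {σ | ∀ v ∈ S, σ v = τ v}

/-- The event that site `v` has spin `i`. -/
def eventVal {α : Type*} (v : α) (i : Bool) : Set (α → Bool) := {σ | σ v = i}

/-- The influence `I^τ(u → v) = μ_τ(σ_v = 1 | σ_u = 1) - μ_τ(σ_v = 1 | σ_u = 0)`, where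
`μ_τ` is `μ` conditioned on agreeing with `τ` on `S`. -/
noncomputable def influence {α : Type*} [Fintype α] (μ : (α → Bool) → ℝ)
    (S : Set α) (τ : α → Bool) (u v : α) : ℝ :=
  cpr μ (eventVal v true) (eventEq S τ ∩ eventVal u true)
    - cpr μ (eventVal v true) (eventEq S τ ∩ eventVal u false)

/-- `N_{v,ℓ}`: the number of simple paths with exactly `ℓ+1` vertices starting at `v`. -/
noncomputable def numPaths {V : Type*} (G : SimpleGraph V) (v : V) (ℓ : ℕ) : ℕ :=
  Nat.card {p : (u : V) × G.Walk v u // p.2.IsPath ∧ p.2.length = ℓ}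

/-- The `d`-branching value `S_v = Σ_{ℓ ≥ 0} N_{v,ℓ}/d^ℓ` of a vertex `v`. -/
noncomputable def branchingValue {V : Type*} (G : SimpleGraph V) (d : ℝ) (v : V) : ℝ :=
  ∑' ℓ : ℕ, (numPaths G v ℓ : ℝ) / d ^ ℓ


/-! ### The contraction inequality -/

/-- The exponent is chosen so that `u ↦ u ^ b / (-log (1 - u))` peaks at `u = 1 / d`. -/
lemma rpow_le_neg_log_s1 {d s b u : ℝ} (hd : 1 < d) (hs : s = -Real.log (1 - 1 / d))
    (hb : b * s = 1 / (d - 1)) (hb0 : 0 < b) (hu0 : 0 ≤ u) (hu1 : u < 1) :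
    (d * u) ^ b * s ≤ -Real.log (1 - u) := by
  have hd0 : 0 < d := by linarith
  rcases hu0.eq_or_lt with rfl | hu
  · simp [Real.zero_rpow hb0.ne']
  have hinv : 1 / d < 1 := by rw [div_lt_one hd0]; exact hd
  have hinv0 : 0 < 1 / d := by positivity
  have hx : 0 < d * u := by positivity
  have h1 := Real.hasSum_pow_div_log_of_abs_lt_one (x := u) (by rw [abs_of_pos hu]; exact hu1)
  have h2 := Real.hasSum_pow_div_log_of_abs_lt_one (x := 1 / d)
    (by rw [abs_of_pos hinv0]; exact hinv)
  rw [← hs] at h2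
  have h3 : HasSum (fun n : ℕ => (1 / d) ^ (n + 1)) (1 / (d - 1)) := by
    have := (hasSum_geometric_of_lt_one hinv0.le hinv).mul_left (1 / d)
    convert! this using 1
    · ext n; rw [pow_succ']
    · field_simp
  have h4 := ((h2.mul_left (1 - b * Real.log (d * u))).add
    (h3.mul_left (Real.log (d * u)))).mul_left ((d * u) ^ b)
  have h5 := hasSum_le (fun n : ℕ => ?_) h4 h1
  · convert! h5 using 1
    rw [← hb]; ring
  · -- termwise tangent-line bound `x ^ (n + 1 - b) ≥ 1 + (n + 1 - b) log x` at `x = d u`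
    have e1 : u ^ (n + 1) / ((n : ℝ) + 1)
        = (d * u) ^ b * ((1 / d) ^ (n + 1) / ((n : ℝ) + 1)
          * Real.exp (((n : ℝ) + 1 - b) * Real.log (d * u))) := by
      have : Real.exp (((n : ℝ) + 1 - b) * Real.log (d * u)) * (d * u) ^ b
          = (d * u) ^ (n + 1) := by
        rw [Real.rpow_def_of_pos hx, ← Real.exp_add, ← Real.rpow_natCast,
          Real.rpow_def_of_pos hx]
        congr 1; push_cast; ring
      rw [mul_comm, mul_assoc, this, mul_pow, one_div, inv_pow]
      field_simp
    rw [e1]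
    have hc : 0 ≤ (1 / d) ^ (n + 1) / ((n : ℝ) + 1) := by positivity
    have ht := Real.add_one_le_exp (((n : ℝ) + 1 - b) * Real.log (d * u))
    refine mul_le_mul_of_nonneg_left ?_ (Real.rpow_nonneg hx.le _)
    refine le_trans (le_of_eq ?_) (mul_le_mul_of_nonneg_left ht hc)
    have : ((n : ℝ) + 1) ≠ 0 := by positivity
    field_simp
    ring

lemma lamc_pos {d : ℝ} (hd : 1 < d) : 0 < lamc d := by
  have h1 : 0 < d := by linarith
  have h2 : 0 < d - 1 := by linarith
  unfold lamc; positivity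

/-- At criticality, `T ↦ T * p(T) ^ b` peaks at `T = d s`, where `p = 1 / d`. -/
lemma critical_bound {d s b T : ℝ} (hd : 1 < d) (hs : s = -Real.log (1 - 1 / d)) (hs0 : 0 < s)
    (hb : b * s = 1 / (d - 1)) (hb0 : 0 < b) :
    (d * (lamc d * Real.exp (-T) / (1 + lamc d * Real.exp (-T)))) ^ b * T ≤ d * s := by
  have hd0 : 0 < d := by linarith
  have hd1 : 0 < d - 1 := by linarith
  have hlc := lamc_pos hd
  have hds : 0 < d * s := by positivity
  have hlam : lamc d * (d - 1) = Real.exp (d * s) := by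
    have h1 : 1 - 1 / d = (d - 1) / d := by field_simp
    have h2 : Real.exp (d * s) = ((d - 1) / d) ^ (-d) := by
      rw [Real.rpow_def_of_pos (by positivity), hs, h1]; congr 1; ring
    rw [h2, Real.rpow_neg (by positivity), Real.div_rpow hd1.le hd0.le, lamc,
      Real.rpow_add hd1, Real.rpow_one]
    field_simp
  set p := lamc d * Real.exp (-T) / (1 + lamc d * Real.exp (-T)) with hp
  have hp0 : 0 < p := by positivity
  have hpe : p = 1 / (1 + (d - 1) * Real.exp (T - d * s)) := by
    rw [hp, Real.exp_sub, ← hlam, Real.exp_neg]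
    have := Real.exp_pos T
    field_simp
    ring
  have hle : d * p ≤ Real.exp (-(1 - 1 / d) * (T - d * s)) := by
    have h1 := Real.add_one_le_exp (-(1 - 1 / d) * (T - d * s))
    have h2 := Real.add_one_le_exp (1 / d * (T - d * s))
    have h3 : Real.exp (-(1 - 1 / d) * (T - d * s)) * Real.exp (T - d * s)
        = Real.exp (1 / d * (T - d * s)) := by
      rw [← Real.exp_add]; congr 1; ring
    rw [hpe, mul_one_div, div_le_iff₀ (by positivity)]
    have h5 : d = (-(1 - 1 / d) * (T - d * s) + 1)
        + (d - 1) * (1 / d * (T - d * s) + 1) := by field_simp; ring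
    have h6 := mul_le_mul_of_nonneg_left h2 hd1.le
    calc d ≤ _ := h5.le
      _ ≤ Real.exp (-(1 - 1 / d) * (T - d * s))
          + (d - 1) * Real.exp (1 / d * (T - d * s)) := add_le_add h1 h6
      _ = _ := by rw [← h3]; ring
  have hpow : (d * p) ^ b ≤ Real.exp (-(T / (d * s) - 1)) := by
    refine (Real.rpow_le_rpow (by positivity) hle hb0.le).trans (le_of_eq ?_)
    rw [← Real.exp_mul]
    congr 1
    have : b = 1 / ((d - 1) * s) := by
      field_simp at hb ⊢; linarith
    rw [this]; field_simp
  have ht := Real.add_one_le_exp (T / (d * s) - 1)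
  have hT : T ≤ d * s * Real.exp (T / (d * s) - 1) := by
    have := mul_le_mul_of_nonneg_left ht hds.le
    calc T = d * s * (T / (d * s) - 1 + 1) := by field_simp; ring
      _ ≤ _ := this
  rcases le_total T 0 with h | h
  · exact (mul_nonpos_of_nonneg_of_nonpos (by positivity) h).trans hds.le
  · calc (d * p) ^ b * T ≤ Real.exp (-(T / (d * s) - 1)) * (d * s * Real.exp (T / (d * s) - 1)) :=
          mul_le_mul hpow hT h (Real.exp_pos _).le
      _ = d * s := by rw [Real.exp_neg]; field_simp

/-- Strict contraction below criticality, with exponent `b > 1` depending only on `d` and rate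
`r < 1`, uniformly in the number of children: `Q` is the occupation probability of a vertex whose
children have occupation probabilities `q i`. -/
lemma contraction (d lam : ℝ) (hd : 1 < d) (hlam : 0 < lam) (hcrit : lam < lamc d) :
    ∃ b r : ℝ, 1 < b ∧ 0 < r ∧ r < 1 ∧ ∀ (ι : Type) [Fintype ι] (q : ι → ℝ) (Q : ℝ),
      (∀ i, 0 ≤ q i) → (∀ i, q i < 1) →
      Q = lam * (∏ i, (1 - q i)) / (1 + lam * ∏ i, (1 - q i)) →
      ∑ i, (Q * q i) ^ b ≤ r ^ b * d ^ (1 - 2 * b) := by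
  have hd0 : 0 < d := by linarith
  have hd1 : 0 < d - 1 := by linarith
  have hlc := lamc_pos hd
  have hinv : 1 / d < 1 := by rw [div_lt_one hd0]; exact hd
  have hinv0 : 0 < 1 / d := by positivity
  obtain ⟨s, hs⟩ : ∃ s, s = -Real.log (1 - 1 / d) := ⟨_, rfl⟩
  have hs0 : 0 < s := by
    rw [hs, neg_pos]; exact Real.log_neg (by linarith) (by linarith)
  have hslt : s < 1 / (d - 1) := by
    have := Real.log_lt_sub_one_of_pos (x := d / (d - 1)) (by positivity)
      (by rw [Ne, div_eq_one_iff_eq hd1.ne']; linarith)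
    have h1 : s = Real.log (d / (d - 1)) := by
      rw [hs, ← Real.log_inv]; congr 1; field_simp
    rw [h1]
    calc _ < d / (d - 1) - 1 := this
      _ = 1 / (d - 1) := by field_simp; ring
  obtain ⟨b, hbd⟩ : ∃ b, b = 1 / (d - 1) / s := ⟨_, rfl⟩
  have hb : b * s = 1 / (d - 1) := by rw [hbd]; field_simp
  have hb1 : 1 < b := by rw [hbd, one_lt_div hs0]; exact hslt
  have hb0 : 0 < b := by linarith
  refine ⟨b, lam * (1 + lamc d) / (lamc d * (1 + lam)), hb1, by positivity, ?_, ?_⟩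
  · rw [div_lt_one (by positivity)]; nlinarith
  intro ι _ q Q hq0 hq1 hQ
  set r := lam * (1 + lamc d) / (lamc d * (1 + lam)) with hr
  have hr0 : 0 < r := by positivity
  set T := ∑ i, -Real.log (1 - q i) with hT
  have hT0 : 0 ≤ T := Finset.sum_nonneg fun i _ => by
    have := Real.log_nonpos (x := 1 - q i) (by linarith [hq1 i]) (by linarith [hq0 i])
    linarith
  have hprod : ∏ i, (1 - q i) = Real.exp (-T) := by
    rw [hT, ← Finset.sum_neg_distrib, Real.exp_sum]
    refine Finset.prod_congr rfl fun i _ => ?_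
    rw [neg_neg, Real.exp_log (by linarith [hq1 i])]
  have hy1 : Real.exp (-T) ≤ 1 := by rw [Real.exp_le_one_iff]; linarith
  have hQ' : Q = lam * Real.exp (-T) / (1 + lam * Real.exp (-T)) := by
    rw [hQ, hprod]
  set P := lamc d * Real.exp (-T) / (1 + lamc d * Real.exp (-T)) with hP
  have hP0 : 0 < P := by positivity
  have hQ0 : 0 < Q := by rw [hQ']; positivity
  have hQP : Q ≤ r * P := by
    have hy := Real.exp_pos (-T)
    set y := Real.exp (-T)
    rw [hQ', hr, hP, div_mul_div_comm, div_le_div_iff₀ (by positivity) (by positivity)]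
    have h1 : 0 ≤ (lamc d - lam) * (1 - y) := mul_nonneg (by linarith) (by linarith)
    have h2 : 0 ≤ lam * y * lamc d := by positivity
    nlinarith [mul_nonneg h2 h1]
  have hterm : ∀ i, (Q * q i) ^ b ≤ Q ^ b * (d ^ (-b) * (-Real.log (1 - q i) / s)) := by
    intro i
    have h1 := rpow_le_neg_log_s1 hd hs hb hb0 (hq0 i) (hq1 i)
    rw [Real.mul_rpow hQ0.le (hq0 i)]
    rw [Real.mul_rpow hd0.le (hq0 i)] at h1
    refine mul_le_mul_of_nonneg_left ?_ (by positivity)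
    rw [Real.rpow_neg hd0.le, inv_mul_eq_div, le_div_iff₀ (by positivity), le_div_iff₀ hs0]
    linarith
  have hcb := critical_bound (T := T) hd hs hs0 hb hb0
  rw [← hP, Real.mul_rpow hd0.le hP0.le] at hcb
  calc ∑ i, (Q * q i) ^ b ≤ ∑ i, Q ^ b * (d ^ (-b) * (-Real.log (1 - q i) / s)) :=
        Finset.sum_le_sum fun i _ => hterm i
    _ = Q ^ b * (d ^ (-b) * (T / s)) := by
        rw [← Finset.mul_sum, ← Finset.mul_sum, ← Finset.sum_div]
    _ ≤ (r * P) ^ b * (d ^ (-b) * (T / s)) := by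
        have := Real.rpow_le_rpow hQ0.le hQP hb0.le
        gcongr
    _ = r ^ b * d ^ (-b) / s * d ^ (-b) * (d ^ b * P ^ b * T) := by
        rw [Real.mul_rpow hr0.le hP0.le, Real.rpow_neg hd0.le]
        field_simp
    _ ≤ r ^ b * d ^ (-b) / s * d ^ (-b) * (d * s) := by gcongr
    _ = r ^ b * d ^ (1 - 2 * b) := by
        rw [show 1 - 2 * b = 1 + -b + -b by ring, Real.rpow_add hd0, Real.rpow_add hd0,
          Real.rpow_one]
        field_simp

/-! ### One step of the recursion -/

/-- Inductive step for the bound `√q * J ≤ C * B ^ (1 / χ)`, where `1 / χ = 1 - 1 / (2 * b)` and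
`C = (1 - √r)⁻¹` solves `1 + C * √r = C`. -/
lemma holder_step {d b r : ℝ} (hd : 1 < d) (hb1 : 1 < b) (hr0 : 0 < r) (hr1 : r < 1)
    {ι : Type} [Fintype ι] (q J B : ι → ℝ) (Q : ℝ) (hQ0 : 0 ≤ Q) (hQ1 : Q ≤ 1)
    (hq0 : ∀ i, 0 ≤ q i) (hB : ∀ i, 0 ≤ B i)
    (hcon : ∑ i, (Q * q i) ^ b ≤ r ^ b * d ^ (1 - 2 * b))
    (hJ : ∀ i, √(q i) * J i ≤ (1 - √r)⁻¹ * B i ^ (1 - 1 / (2 * b))) :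
    √Q * (1 + ∑ i, q i * J i)
      ≤ (1 - √r)⁻¹ * (1 + d⁻¹ * ∑ i, B i) ^ (1 - 1 / (2 * b)) := by
  have hd0 : 0 < d := by linarith
  have hb0 : 0 < b := by linarith
  set β := 1 - 1 / (2 * b) with hβ
  have hβ0 : 0 < β := by
    rw [hβ, sub_pos, div_lt_one (by positivity)]; linarith
  have hsr : √r < 1 := by rw [Real.sqrt_lt' one_pos]; simpa using hr1
  have hsr0 : 0 < √r := Real.sqrt_pos.mpr hr0
  set C := (1 - √r)⁻¹ with hC
  have hC0 : 0 < C := by rw [hC, inv_pos]; linarith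
  have hCr : 1 + C * √r = C := by
    rw [hC]; have : (1 - √r) ≠ 0 := by linarith
    field_simp; ring
  have hpq : (2 * b).HolderConjugate (1 / β) := by
    rw [Real.holderConjugate_iff]
    refine ⟨by linarith, ?_⟩
    rw [one_div, inv_inv, hβ]; ring
  have hS0 : 0 ≤ ∑ i, B i := Finset.sum_nonneg fun i _ => hB i
  have h1 : ∑ i, √(Q * q i) * B i ^ β ≤ (√r * d ^ (-β)) * (∑ i, B i) ^ β := by
    have := Real.inner_le_Lp_mul_Lq_of_nonneg Finset.univ hpq
      (f := fun i => √(Q * q i)) (g := fun i => B i ^ β)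
      (fun i _ => Real.sqrt_nonneg _) (fun i _ => Real.rpow_nonneg (hB i) _)
    refine this.trans ?_
    have e1 : ∀ i, √(Q * q i) ^ (2 * b) = (Q * q i) ^ b := fun i => by
      rw [Real.sqrt_eq_rpow, ← Real.rpow_mul (mul_nonneg hQ0 (hq0 i))]; congr 1; ring
    have e2 : ∀ i, (B i ^ β) ^ (1 / β) = B i := fun i => by
      rw [← Real.rpow_mul (hB i), mul_one_div_cancel hβ0.ne', Real.rpow_one]
    simp only [e1, e2, one_div_one_div]
    refine mul_le_mul_of_nonneg_right ?_ (Real.rpow_nonneg hS0 _)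
    refine (Real.rpow_le_rpow (Finset.sum_nonneg fun i _ =>
      Real.rpow_nonneg (mul_nonneg hQ0 (hq0 i)) _) hcon (by positivity)).trans (le_of_eq ?_)
    rw [Real.mul_rpow (by positivity) (by positivity), ← Real.rpow_mul hr0.le,
      ← Real.rpow_mul hd0.le, Real.sqrt_eq_rpow]
    congr 2
    · field_simp
    · rw [hβ]; field_simp; ring
  have h2 : √Q * ∑ i, q i * J i ≤ C * ∑ i, √(Q * q i) * B i ^ β := by
    rw [Finset.mul_sum, Finset.mul_sum]
    refine Finset.sum_le_sum fun i _ => ?_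
    have := mul_le_mul_of_nonneg_left (hJ i) (Real.sqrt_nonneg (Q * q i))
    calc √Q * (q i * J i) = √(Q * q i) * (√(q i) * J i) := by
          rw [Real.sqrt_mul hQ0]
          nth_rewrite 1 [← Real.mul_self_sqrt (hq0 i)]; ring
      _ ≤ _ := this
      _ = _ := by ring
  have h3 : d ^ (-β) * (∑ i, B i) ^ β ≤ (1 + d⁻¹ * ∑ i, B i) ^ β := by
    rw [Real.rpow_neg hd0.le, ← Real.inv_rpow hd0.le, ← Real.mul_rpow (by positivity) hS0]
    exact Real.rpow_le_rpow (by positivity) (by linarith) hβ0.le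
  have h4 : 1 ≤ (1 + d⁻¹ * ∑ i, B i) ^ β :=
    Real.one_le_rpow (by have : 0 ≤ d⁻¹ * ∑ i, B i := by positivity
                         linarith) hβ0.le
  have h5 : √Q ≤ 1 := Real.sqrt_le_iff.mpr ⟨zero_le_one, by simpa using hQ1⟩
  calc √Q * (1 + ∑ i, q i * J i) = √Q + √Q * ∑ i, q i * J i := by ring
    _ ≤ 1 + C * (√r * d ^ (-β) * (∑ i, B i) ^ β) :=
        add_le_add h5 (h2.trans (mul_le_mul_of_nonneg_left h1 hC0.le))
    _ = 1 + C * √r * (d ^ (-β) * (∑ i, B i) ^ β) := by ring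
    _ ≤ (1 + d⁻¹ * ∑ i, B i) ^ β + C * √r * (1 + d⁻¹ * ∑ i, B i) ^ β := by gcongr
    _ = C * (1 + d⁻¹ * ∑ i, B i) ^ β := by
        conv_rhs => rw [← hCr]
        ring

/-! ### Splitting a tree at its root -/

/-- The pieces obtained by deleting the root `ρ` of a tree `T`: trees `G i` on vertex sets `X i`,
each attached to `ρ` through its own root `c i`. The equivalence `e` sends `none` to `ρ` and
identifies the rest of the vertices with the disjoint union of the `X i`. -/
structure RootSplit {V : Type} (T : SimpleGraph V) (ρ : V) where
  ι : Type
  fι : Fintype ι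
  X : ι → Type
  fX : ∀ i, Fintype (X i)
  G : ∀ i, SimpleGraph (X i)
  c : ∀ i, X i
  e : Option (Σ i, X i) ≃ V
  e_none : e none = ρ
  tree : ∀ i, (G i).IsTree
  adj_root : ∀ i x, T.Adj ρ (e (some ⟨i, x⟩)) ↔ x = c i
  adj_same : ∀ i x y, T.Adj (e (some ⟨i, x⟩)) (e (some ⟨i, y⟩)) ↔ (G i).Adj x y
  adj_diff : ∀ i j x y, i ≠ j → ¬ T.Adj (e (some ⟨i, x⟩)) (e (some ⟨j, y⟩))

attribute [instance] RootSplit.fι RootSplit.fX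

/-- Weight of a configuration in the hard-core model with vertex-dependent spin weights `w`;
pinnings are encoded by giving weight `0` to the forbidden spin. -/
noncomputable def wt {V : Type} [Fintype V] (G : SimpleGraph V) (w : V → Bool → ℝ)
    (σ : V → Bool) : ℝ :=
  if IsIndepConf G σ then ∏ v, w v (σ v) else 0

/-- Partition function restricted to configurations with spin `b` at `r`. -/
noncomputable def Zr {V : Type} [Fintype V] (G : SimpleGraph V) (w : V → Bool → ℝ) (r : V)
    (b : Bool) : ℝ :=
  ∑ σ : V → Bool, if σ r = b then wt G w σ else 0

/-- Partition function restricted to configurations with spin `b` at `r` and `x` occupied. -/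
noncomputable def Mr {V : Type} [Fintype V] (G : SimpleGraph V) (w : V → Bool → ℝ) (r : V)
    (b : Bool) (x : V) : ℝ :=
  ∑ σ : V → Bool, if σ r = b ∧ σ x = true then wt G w σ else 0

/-- Total influence of `r`, as a sum of differences of ratios of partition functions. Meaningful
when both spins at `r` have positive weight. -/
noncomputable def totInf {V : Type} [Fintype V] (G : SimpleGraph V) (w : V → Bool → ℝ)
    (r : V) : ℝ :=
  ∑ x, |Mr G w r true x / Zr G w r true - Mr G w r false x / Zr G w r false|

/-- Sum of `d⁻¹ ^ dist` over all vertices. In a tree, paths from the root correspond to vertices, so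
this is the branching value. -/
noncomputable def distBranching {V : Type} [Fintype V] (G : SimpleGraph V) (d : ℝ) (r : V) : ℝ :=
  ∑ x, d⁻¹ ^ G.dist r x

namespace RootSplit

variable {V : Type} {T : SimpleGraph V} {ρ : V}

/-- Restriction of vertex weights to a piece. -/
def res (D : RootSplit T ρ) {β : Type} (w : V → β) (i : D.ι) : D.X i → β :=
  fun x => w (D.e (some ⟨i, x⟩))

lemma indep_iff (D : RootSplit T ρ) (σ : V → Bool) :
    IsIndepConf T σ ↔ ∀ i, ¬(σ ρ = true ∧ D.res σ i (D.c i) = true) ∧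
      IsIndepConf (D.G i) (D.res σ i) := by
  constructor
  · exact fun h i => ⟨h _ _ ((D.adj_root i _).2 rfl),
      fun u v huv => h _ _ ((D.adj_same i u v).2 huv)⟩
  · intro h u v huv
    obtain ⟨u, rfl⟩ := D.e.surjective u
    obtain ⟨v, rfl⟩ := D.e.surjective v
    match u, v with
    | none, none => exact absurd rfl huv.ne
    | none, some ⟨i, x⟩ =>
      rw [D.e_none] at huv ⊢
      obtain rfl := (D.adj_root i x).1 huv
      exact (h i).1
    | some ⟨i, x⟩, none =>
      rw [D.e_none] at huv ⊢
      obtain rfl := (D.adj_root i x).1 huv.symm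
      rw [and_comm]; exact (h i).1
    | some ⟨i, x⟩, some ⟨j, y⟩ =>
      by_cases hij : i = j
      · subst hij
        exact (h i).2 x y ((D.adj_same i x y).1 huv)
      · exact absurd huv (D.adj_diff i j x y hij)

lemma prod_split (D : RootSplit T ρ) [Fintype V] (f : V → ℝ) :
    ∏ v, f v = f ρ * ∏ i, ∏ x, D.res f i x := by
  rw [← Equiv.prod_comp D.e, Fintype.prod_option, D.e_none, Fintype.prod_sigma]
  rfl

lemma sum_split (D : RootSplit T ρ) [Fintype V] (f : V → ℝ) :
    ∑ v, f v = f ρ + ∑ i, ∑ x, D.res f i x := by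
  rw [← Equiv.sum_comp D.e, Fintype.sum_option, D.e_none, Fintype.sum_sigma]
  rfl

lemma wt_split (D : RootSplit T ρ) [Fintype V] (w : V → Bool → ℝ) (σ : V → Bool) :
    wt T w σ = w ρ (σ ρ) * ∏ i, if σ ρ = true ∧ D.res σ i (D.c i) = true then 0
      else wt (D.G i) (D.res w i) (D.res σ i) := by
  by_cases h : IsIndepConf T σ
  · have h' := (D.indep_iff σ).1 h
    rw [wt, if_pos h, D.prod_split]
    congr 1
    refine Finset.prod_congr rfl fun i _ => ?_
    rw [if_neg (h' i).1, wt, if_pos (h' i).2]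
    rfl
  · rw [wt, if_neg h]
    rw [D.indep_iff] at h
    push Not at h
    obtain ⟨i, hi⟩ := h
    rw [Finset.prod_eq_zero (Finset.mem_univ i), mul_zero]
    split_ifs with h1
    · rfl
    · rw [wt, if_neg (hi fun h2 h3 => h1 ⟨h2, h3⟩)]

lemma symm_root (D : RootSplit T ρ) : D.e.symm ρ = none :=
  (Equiv.symm_apply_eq _).2 D.e_none.symm

/-- A configuration on the tree is a root spin together with configurations on the pieces. -/
def confEquiv (D : RootSplit T ρ) : (V → Bool) ≃ Bool × (∀ i, D.X i → Bool) where
  toFun σ := (σ ρ, fun i => D.res σ i)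
  invFun p := fun v => match D.e.symm v with
    | none => p.1
    | some ⟨i, x⟩ => p.2 i x
  left_inv σ := by
    ext v
    obtain ⟨v, rfl⟩ := D.e.surjective v
    match v with
    | none => simp [D.e_none, D.symm_root]
    | some ⟨i, x⟩ => simp [res]
  right_inv p := by
    obtain ⟨b, s⟩ := p
    refine Prod.ext ?_ ?_
    · simp [D.symm_root]
    · funext i x
      simp [res]

/-- Factorization of root-conditioned sums: test functions `h i` of the configurations on the pieces
are summed independently, with the root of a piece forced to be empty when `ρ` is occupied. -/
lemma sum_conf (D : RootSplit T ρ) [Fintype V] (w : V → Bool → ℝ) (b : Bool)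
    (h : ∀ i, (D.X i → Bool) → ℝ) :
    ∑ σ : V → Bool, (if σ ρ = b then wt T w σ * ∏ i, h i (D.res σ i) else 0)
      = w ρ b * ∏ i, ∑ s : D.X i → Bool, (if b = true ∧ s (D.c i) = true then 0
          else wt (D.G i) (D.res w i) s) * h i s := by
  have key := Fintype.sum_equiv D.confEquiv
    (fun σ => if σ ρ = b then wt T w σ * ∏ i, h i (D.res σ i) else 0)
    (fun p => if p.1 = b then (w ρ p.1 * ∏ i, ((if p.1 = true ∧ p.2 i (D.c i) = true then 0
          else wt (D.G i) (D.res w i) (p.2 i)) * h i (p.2 i))) else 0)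
    (fun σ => by
      change (if σ ρ = b then _ else _) = if σ ρ = b then _ else _
      rw [D.wt_split, mul_assoc, ← Finset.prod_mul_distrib]
      rfl)
  rw [key, Fintype.sum_prod_type, Finset.prod_univ_sum, Fintype.piFinset_univ, Finset.mul_sum,
    Finset.sum_eq_single b]
  · simp
  · intro b' _ hb'
    simp [hb']
  · simp

end RootSplit

/-! ### Recursions for partition functions, influences and branching values -/

section Recursion

variable {V : Type} [Fintype V]

lemma wt_nonneg {G : SimpleGraph V} {w : V → Bool → ℝ} (hw : ∀ v b, 0 ≤ w v b)
    (σ : V → Bool) : 0 ≤ wt G w σ := by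
  unfold wt
  split_ifs
  · exact Finset.prod_nonneg fun v _ => hw _ _
  · exact le_rfl

lemma Zr_nonneg {G : SimpleGraph V} {w : V → Bool → ℝ} (hw : ∀ v b, 0 ≤ w v b) (r : V)
    (b : Bool) : 0 ≤ Zr G w r b :=
  Finset.sum_nonneg fun σ _ => by split_ifs <;> simp [wt_nonneg hw]

lemma Mr_nonneg {G : SimpleGraph V} {w : V → Bool → ℝ} (hw : ∀ v b, 0 ≤ w v b) (r : V)
    (b : Bool) (x : V) : 0 ≤ Mr G w r b x :=
  Finset.sum_nonneg fun σ _ => by split_ifs <;> simp [wt_nonneg hw]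

lemma Mr_le_Zr {G : SimpleGraph V} {w : V → Bool → ℝ} (hw : ∀ v b, 0 ≤ w v b) (r : V)
    (b : Bool) (x : V) : Mr G w r b x ≤ Zr G w r b :=
  Finset.sum_le_sum fun σ _ => by
    by_cases h1 : σ r = b <;> by_cases h2 : σ x = true <;> simp [h1, h2, wt_nonneg hw]

/-- `Zr` as seen from a parent with spin `b`: an occupied parent forces the root to be empty. -/
lemma sum_below (G : SimpleGraph V) (w : V → Bool → ℝ) (r : V) (b : Bool) :
    ∑ s : V → Bool, (if b = true ∧ s r = true then 0 else wt G w s)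
      = Zr G w r false + if b = true then 0 else Zr G w r true := by
  cases b
  · simp only [Zr, Bool.false_eq_true, false_and, if_false, ← Finset.sum_add_distrib]
    refine Finset.sum_congr rfl fun s _ => ?_
    cases s r <;> simp
  · simp only [Zr, true_and, if_true, add_zero]
    refine Finset.sum_congr rfl fun s _ => ?_
    cases s r <;> simp

lemma sum_below_marked (G : SimpleGraph V) (w : V → Bool → ℝ) (r : V) (b : Bool) (x : V) :
    ∑ s : V → Bool, (if b = true ∧ s r = true then 0 else wt G w s) * (if s x = true then 1 else 0)
      = Mr G w r false x + if b = true then 0 else Mr G w r true x := by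
  cases b
  · simp only [Mr, Bool.false_eq_true, false_and, if_false, ← Finset.sum_add_distrib]
    refine Finset.sum_congr rfl fun s _ => ?_
    cases s r <;> simp
  · simp only [Mr, true_and, if_true, add_zero]
    refine Finset.sum_congr rfl fun s _ => ?_
    cases s r <;> simp

variable {T : SimpleGraph V} {ρ : V}

lemma Zr_split (D : RootSplit T ρ) (w : V → Bool → ℝ) (b : Bool) :
    Zr T w ρ b = w ρ b * ∏ i, (Zr (D.G i) (D.res w i) (D.c i) false
      + if b = true then 0 else Zr (D.G i) (D.res w i) (D.c i) true) := by
  have := D.sum_conf w b (fun _ _ => 1)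
  simp only [Finset.prod_const_one, mul_one, sum_below] at this
  exact this

lemma Mr_split (D : RootSplit T ρ) (w : V → Bool → ℝ) (b : Bool) (j : D.ι) (x : D.X j) :
    Mr T w ρ b (D.e (some ⟨j, x⟩)) = w ρ b *
      ((Mr (D.G j) (D.res w j) (D.c j) false x
        + if b = true then 0 else Mr (D.G j) (D.res w j) (D.c j) true x) *
      ∏ i ∈ Finset.univ.erase j, (Zr (D.G i) (D.res w i) (D.c i) false
      + if b = true then 0 else Zr (D.G i) (D.res w i) (D.c i) true)) := by
  have := D.sum_conf w b (Function.update (fun _ _ => 1) j (fun s => if s x = true then 1 else 0))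
  rw [← Finset.mul_prod_erase _ _ (Finset.mem_univ j)] at this
  have h1 : ∀ σ : V → Bool, ∏ i, (Function.update (fun _ _ => (1 : ℝ)) j
      (fun s : D.X j → Bool => if s x = true then (1 : ℝ) else 0) : ∀ i, (D.X i → Bool) → ℝ) i
        (D.res σ i) = if σ (D.e (some ⟨j, x⟩)) = true then 1 else 0 := by
    intro σ
    rw [← Finset.mul_prod_erase _ _ (Finset.mem_univ j), Finset.prod_eq_one, mul_one,
      Function.update_self]
    · rfl
    · intro i hi
      rw [Function.update_of_ne (Finset.ne_of_mem_erase hi)]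
  have h2 : ∏ i ∈ Finset.univ.erase j, ∑ s : D.X i → Bool,
      (if b = true ∧ s (D.c i) = true then 0 else wt (D.G i) (D.res w i) s)
        * (Function.update (fun _ _ => (1 : ℝ)) j
      (fun s : D.X j → Bool => if s x = true then (1 : ℝ) else 0) : ∀ i, (D.X i → Bool) → ℝ) i s
      = ∏ i ∈ Finset.univ.erase j, (Zr (D.G i) (D.res w i) (D.c i) false
      + if b = true then 0 else Zr (D.G i) (D.res w i) (D.c i) true) := by
    refine Finset.prod_congr rfl fun i hi => ?_
    rw [Function.update_of_ne (Finset.ne_of_mem_erase hi)]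
    simp only [mul_one]
    exact sum_below _ _ _ _
  rw [h2, Function.update_self, sum_below_marked] at this
  rw [← this, Mr]
  refine Finset.sum_congr rfl fun σ _ => ?_
  rw [h1]
  by_cases h3 : σ ρ = b <;> simp [h3]

/-- Admissible spin weights: the fugacity weights `1, lam`, some of them replaced by `0`. -/
def Admissible (lam : ℝ) {V : Type} (w : V → Bool → ℝ) : Prop :=
  ∀ v, (w v true = 0 ∨ w v true = lam) ∧ (w v false = 0 ∨ w v false = 1)

omit [Fintype V] in
lemma Admissible.nonneg {lam : ℝ} (hl : 0 < lam) {w : V → Bool → ℝ} (h : Admissible lam w) :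
    ∀ v b, 0 ≤ w v b := by
  intro v b
  cases b
  · rcases (h v).2 with h | h <;> simp [h]
  · rcases (h v).1 with h | h <;> simp [h, hl.le]

omit [Fintype V] in
lemma Admissible.res {lam : ℝ} {w : V → Bool → ℝ} (h : Admissible lam w) (D : RootSplit T ρ)
    (i : D.ι) : Admissible lam (D.res w i) := fun _ => h _

/-- An occupied root can be emptied at the cost of a factor `lam`. -/
lemma Zr_le {lam : ℝ} (hl : 0 < lam) (D : RootSplit T ρ) {w : V → Bool → ℝ}
    (h : Admissible lam w) (h0 : 0 < Zr T w ρ false) : Zr T w ρ true ≤ lam * Zr T w ρ false := by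
  have hnn := fun i => (h.res D i).nonneg hl
  have hw0 : w ρ false = 1 := by
    rcases (h ρ).2 with h1 | h1
    · rw [Zr_split D, h1, zero_mul] at h0; exact absurd h0 (lt_irrefl _)
    · exact h1
  have hw1 : w ρ true ≤ lam := by rcases (h ρ).1 with h1 | h1 <;> simp [h1, hl.le]
  rw [Zr_split D, Zr_split D, hw0, one_mul]
  refine mul_le_mul hw1 (Finset.prod_le_prod (fun i _ => ?_) fun i _ => ?_)
    (Finset.prod_nonneg fun i _ => ?_) hl.le
  · simpa using Zr_nonneg (hnn i) _ _
  · simpa using Zr_nonneg (hnn i) _ _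
  · simpa using Zr_nonneg (hnn i) _ _

/-- Occupation probability of the root. The value is `0` if no configuration has positive weight. -/
noncomputable def occ (G : SimpleGraph V) (w : V → Bool → ℝ) (r : V) : ℝ :=
  Zr G w r true / (Zr G w r false + Zr G w r true)

/-- If `ρ` can be occupied, then no child of `ρ` is forced to be occupied. -/
lemma child_pos {lam : ℝ} (hl : 0 < lam) (D : RootSplit T ρ) {w : V → Bool → ℝ}
    (h : Admissible lam w) (h1 : 0 < Zr T w ρ true) (i : D.ι) :
    0 < Zr (D.G i) (D.res w i) (D.c i) false := by
  refine lt_of_le_of_ne (Zr_nonneg ((h.res D i).nonneg hl) _ _) fun h2 => ?_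
  rw [Zr_split D, Finset.prod_eq_zero (Finset.mem_univ i) (by simp [← h2]), mul_zero] at h1
  exact lt_irrefl _ h1

lemma one_sub_occ {G : SimpleGraph V} {w : V → Bool → ℝ} {r : V} (h0 : 0 < Zr G w r false)
    (h1 : 0 ≤ Zr G w r true) :
    1 - occ G w r = Zr G w r false / (Zr G w r false + Zr G w r true) := by
  unfold occ
  have : Zr G w r false + Zr G w r true ≠ 0 := by positivity
  field_simp
  ring

lemma occ_formula {lam : ℝ} (hl : 0 < lam) (D : RootSplit T ρ) {w : V → Bool → ℝ}
    (h : Admissible lam w) (h0 : 0 < Zr T w ρ false) (h1 : 0 < Zr T w ρ true) :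
    occ T w ρ = lam * (∏ i, (1 - occ (D.G i) (D.res w i) (D.c i)))
      / (1 + lam * ∏ i, (1 - occ (D.G i) (D.res w i) (D.c i))) := by
  have hnn := fun i => (h.res D i).nonneg hl
  have hc := child_pos hl D h h1
  have hc1 := fun i => Zr_nonneg (hnn i) (D.c i) true (G := D.G i)
  have hw0 : w ρ false = 1 := by
    rcases (h ρ).2 with h2 | h2
    · rw [Zr_split D, h2, zero_mul] at h0; exact absurd h0 (lt_irrefl _)
    · exact h2
  have hw1 : w ρ true = lam := by
    rcases (h ρ).1 with h2 | h2
    · rw [Zr_split D, h2, zero_mul] at h1; exact absurd h1 (lt_irrefl _)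
    · exact h2
  have e : lam * ∏ i, (1 - occ (D.G i) (D.res w i) (D.c i))
      = Zr T w ρ true / Zr T w ρ false := by
    rw [Zr_split D w true, Zr_split D w false, hw0, hw1, one_mul, mul_div_assoc,
      ← Finset.prod_div_distrib]
    congr 1
    refine Finset.prod_congr rfl fun i _ => ?_
    rw [one_sub_occ (hc i) (hc1 i)]
    simp
  rw [e, occ]
  field_simp

/-- One-step recursion for the total influence: influences multiply along edges, and the influence
of the root on its child is minus the occupation probability of the child. -/
lemma totInf_formula {lam : ℝ} (hl : 0 < lam) (D : RootSplit T ρ) {w : V → Bool → ℝ}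
    (h : Admissible lam w) (h0 : 0 < Zr T w ρ false) (h1 : 0 < Zr T w ρ true) :
    totInf T w ρ = 1 + ∑ i, occ (D.G i) (D.res w i) (D.c i)
      * totInf (D.G i) (D.res w i) (D.c i) := by
  have hnn := fun i => (h.res D i).nonneg hl
  have hc := child_pos hl D h h1
  have hc1 := fun i => Zr_nonneg (hnn i) (D.c i) true (G := D.G i)
  rw [totInf, D.sum_split]
  congr 1
  · have e1 : Mr T w ρ true ρ = Zr T w ρ true := by simp [Mr, Zr]
    have e2 : Mr T w ρ false ρ = 0 := by
      refine Finset.sum_eq_zero fun σ _ => ?_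
      cases σ ρ <;> simp
    rw [e1, e2, div_self h1.ne']; simp
  · refine Finset.sum_congr rfl fun j _ => ?_
    rw [totInf, Finset.mul_sum]
    refine Finset.sum_congr rfl fun x _ => ?_
    have hq0 : 0 ≤ occ (D.G j) (D.res w j) (D.c j) :=
      div_nonneg (hc1 j) (add_nonneg (hc j).le (hc1 j))
    rw [RootSplit.res]
    have key : ∀ b, 0 < Zr T w ρ b → Mr T w ρ b (D.e (some ⟨j, x⟩)) / Zr T w ρ b
        = (Mr (D.G j) (D.res w j) (D.c j) false x
            + if b = true then 0 else Mr (D.G j) (D.res w j) (D.c j) true x)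
          / (Zr (D.G j) (D.res w j) (D.c j) false
            + if b = true then 0 else Zr (D.G j) (D.res w j) (D.c j) true) := by
      intro b hb
      rw [Mr_split D]
      rw [Zr_split D, ← Finset.mul_prod_erase _ _ (Finset.mem_univ j)] at hb ⊢
      have n1 := left_ne_zero_of_mul hb.ne'
      have n2 := right_ne_zero_of_mul (right_ne_zero_of_mul hb.ne')
      rw [mul_div_mul_left _ _ n1, mul_div_mul_right _ _ n2]
    rw [key true h1, key false h0, ← abs_of_nonneg hq0, ← abs_mul, ← abs_neg]
    congr 1
    simp only [if_true, Bool.false_eq_true, if_false, add_zero, occ]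
    have z0 := hc j
    -- a child that cannot be occupied needs care: `Mr / Zr` is then the junk value `0 / 0 = 0`
    rcases (hc1 j).eq_or_lt with z1 | z1
    · have hm : Mr (D.G j) (D.res w j) (D.c j) true x = 0 :=
        le_antisymm (z1 ▸ Mr_le_Zr (hnn j) _ _ _) (Mr_nonneg (hnn j) _ _ _)
      rw [← z1, hm]; simp
    · field_simp
      ring

/-- Branching values grow by at least the contributions of the pieces, since distances to the root
increase by at most one. -/
lemma distBranching_split (D : RootSplit T ρ) {d : ℝ} (hd : 1 < d) :
    1 + d⁻¹ * ∑ i, distBranching (D.G i) d (D.c i) ≤ distBranching T d ρ := by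
  have hd0 : 0 < d := by linarith
  rw [distBranching, D.sum_split, SimpleGraph.dist_self, pow_zero, Finset.mul_sum]
  refine add_le_add le_rfl (Finset.sum_le_sum fun i _ => ?_)
  rw [distBranching, Finset.mul_sum]
  refine Finset.sum_le_sum fun x _ => ?_
  rw [RootSplit.res, ← pow_succ']
  refine pow_le_pow_of_le_one (by positivity) (inv_le_one_of_one_le₀ hd.le) ?_
  obtain ⟨p, hp⟩ := (D.tree i).connected.exists_walk_length_eq_dist (D.c i) x
  let f : D.G i →g T := ⟨fun x => D.e (some ⟨i, x⟩), fun {a b} hab => (D.adj_same i a b).2 hab⟩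
  have : T.dist ρ (D.e (some ⟨i, x⟩)) ≤ _ :=
    SimpleGraph.dist_le (SimpleGraph.Walk.cons ((D.adj_root i _).2 rfl) (p.map f))
  rw [← hp]
  simpa using this

end Recursion

/-- Deleting the root splits a tree into its connected components, each of which contains exactly
one neighbour of the root. -/
lemma nonempty_rootSplit {V : Type} [Fintype V] (T : SimpleGraph V) (hT : T.IsTree) (ρ : V) :
    Nonempty (RootSplit T ρ) := by
  set H := T.induce {v | v ≠ ρ} with hH
  have hacyc : H.IsAcyclic := hT.isAcyclic.induce _
  have hex : ∀ C : H.ConnectedComponent, ∃ x : C.supp, ∀ y : C.supp,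
      T.Adj ρ y.1.1 ↔ y = x := by
    intro C
    obtain ⟨x, rfl⟩ := C.exists_rep
    obtain ⟨x, hx⟩ := x
    obtain ⟨p, hp⟩ := (hT.connected ρ x).exists_isPath
    cases p with
    | nil => exact absurd rfl hx
    | @cons _ y _ hy q =>
      rw [SimpleGraph.Walk.cons_isPath_iff] at hp
      have hq : ∀ v ∈ q.support, v ∈ {v | v ≠ ρ} := fun v hv h => hp.2 (h ▸ hv)
      have hmem : H.connectedComponentMk ⟨y, hq _ q.start_mem_support⟩
          = H.connectedComponentMk ⟨x, hx⟩ :=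
        SimpleGraph.ConnectedComponent.sound ⟨q.induce _ hq⟩
      refine ⟨⟨⟨y, hq _ q.start_mem_support⟩, hmem⟩, ?_⟩
      rintro ⟨⟨z, hz⟩, hzC⟩
      refine ⟨fun hρz => ?_, fun h => ?_⟩
      · by_contra hne
        have hzy : z ≠ y := fun h => hne (by subst h; rfl)
        have hzC' : H.connectedComponentMk ⟨z, hz⟩ = H.connectedComponentMk ⟨x, hx⟩ := hzC
        obtain ⟨s, hs⟩ := (SimpleGraph.ConnectedComponent.exact
          (hzC'.trans hmem.symm)).exists_isPath
        -- two distinct paths from `z` to `y`: one avoiding the root, one through the root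
        let f : H →g T := (SimpleGraph.Embedding.induce {v | v ≠ ρ}).toHom
        have hf : Function.Injective f := Subtype.val_injective
        have hB : (SimpleGraph.Walk.cons hρz.symm
            (SimpleGraph.Walk.cons hy SimpleGraph.Walk.nil)).IsPath := by
          have h1 : ρ ≠ y := hy.ne
          have h2 : z ≠ ρ := hz
          simp [SimpleGraph.Walk.cons_isPath_iff, h1, h2, hzy]
        have huniq : s.map f = SimpleGraph.Walk.cons hρz.symm
            (SimpleGraph.Walk.cons hy SimpleGraph.Walk.nil) :=
          congrArg Subtype.val ((hT.isAcyclic.subsingleton_path _ _).elim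
            (⟨s.map f, hs.map hf⟩ : T.Path z y) ⟨_, hB⟩)
        have hsupp : ρ ∈ (s.map f).support :=
          (congrArg (fun w : T.Walk z y => ρ ∈ w.support) huniq).mpr (by simp)
        rw [SimpleGraph.Walk.support_map, List.mem_map] at hsupp
        obtain ⟨a, -, ha⟩ := hsupp
        exact a.2 ha
      · have : z = y := congrArg (fun t => t.1.1) h
        subst this; exact hy
  choose c hc using hex
  let e : Option (Σ C : H.ConnectedComponent, C.supp) ≃ V :=
    (Equiv.optionCongr (Equiv.sigmaFiberEquiv H.connectedComponentMk)).trans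
      (Equiv.optionSubtypeNe ρ)
  have he : ∀ C (x : C.supp), e (some ⟨C, x⟩) = x.1.1 := fun C x => rfl
  refine ⟨{ ι := H.ConnectedComponent, fι := Fintype.ofFinite _, X := fun C => C.supp,
            fX := fun C => Fintype.ofFinite _, G := fun C => C.toSimpleGraph, c := c, e := e,
            e_none := rfl, tree := fun C => hacyc.isTree_connectedComponent C,
            adj_root := fun C x => hc C x
            adj_same := fun C x y => Iff.rfl
            adj_diff := ?_ }⟩
  intro C C' x y hne hadj
  have : H.Adj x.1 y.1 := hadj
  have h1 := SimpleGraph.ConnectedComponent.connectedComponentMk_eq_of_adj this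
  have hx : H.connectedComponentMk x.1 = C := x.2
  have hy : H.connectedComponentMk y.1 = C' := y.2
  exact hne (hx.symm.trans (h1.trans hy))

/-! ### The bound for rooted trees -/

/-- The total influence weighted by `√(occ T w ρ)` is at most a constant times a power of the
branching value. The weight makes the case of a root that cannot be occupied trivial. -/
lemma main_induction {d lam b r : ℝ} (hd : 1 < d) (hl : 0 < lam) (hb1 : 1 < b) (hr0 : 0 < r)
    (hr1 : r < 1)
    (hcon : ∀ (ι : Type) [Fintype ι] (q : ι → ℝ) (Q : ℝ),
      (∀ i, 0 ≤ q i) → (∀ i, q i < 1) →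
      Q = lam * (∏ i, (1 - q i)) / (1 + lam * ∏ i, (1 - q i)) →
      ∑ i, (Q * q i) ^ b ≤ r ^ b * d ^ (1 - 2 * b)) :
    ∀ (n : ℕ) (V : Type) [Fintype V] (T : SimpleGraph V) (ρ : V) (w : V → Bool → ℝ),
      Fintype.card V ≤ n → T.IsTree → Admissible lam w → 0 < Zr T w ρ false →
      √(occ T w ρ) * totInf T w ρ ≤ (1 - √r)⁻¹ * distBranching T d ρ ^ (1 - 1 / (2 * b)) := by
  have hd0 : 0 < d := by linarith
  have hsr : √r < 1 := by rw [Real.sqrt_lt' one_pos]; simpa using hr1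
  have hC0 : 0 < (1 - √r)⁻¹ := by rw [inv_pos]; linarith
  have hBnn : ∀ (V : Type) [Fintype V] (T : SimpleGraph V) (ρ : V), 0 ≤ distBranching T d ρ :=
    fun V _ T ρ => Finset.sum_nonneg fun x _ => by positivity
  have hβ : 0 ≤ 1 - 1 / (2 * b) := by
    rw [sub_nonneg, div_le_one (by positivity)]; linarith
  intro n
  induction n with
  | zero =>
    intro V _ T ρ w hn
    have := Fintype.card_pos_iff.2 ⟨ρ⟩
    omega
  | succ n ih =>
    intro V _ T ρ w hn hT hw h0
    have hZ1 := Zr_nonneg (hw.nonneg hl) ρ true (G := T)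
    rcases hZ1.eq_or_lt with h1 | h1
    · rw [occ, ← h1]
      simp only [zero_div, Real.sqrt_zero, zero_mul]
      exact mul_nonneg hC0.le (Real.rpow_nonneg (hBnn _ _ _) _)
    obtain ⟨D⟩ := nonempty_rootSplit T hT ρ
    have hc := child_pos hl D hw h1
    have hc1 := fun i => Zr_nonneg ((hw.res D i).nonneg hl) (D.c i) true (G := D.G i)
    have hcard : ∀ i, Fintype.card (D.X i) ≤ n := by
      intro i
      have := Fintype.card_lt_of_injective_of_notMem (fun x : D.X i => D.e (some ⟨i, x⟩))
        (fun x y hxy => by simpa using hxy) (b := ρ) (by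
          rintro ⟨x, hx⟩
          have := D.e.injective (hx.trans D.e_none.symm)
          simp at this)
      omega
    have hq0 : ∀ i, 0 ≤ occ (D.G i) (D.res w i) (D.c i) := fun i =>
      div_nonneg (hc1 i) (add_nonneg (hc i).le (hc1 i))
    have hq1 : ∀ i, occ (D.G i) (D.res w i) (D.c i) < 1 := fun i => by
      rw [occ, div_lt_one (add_pos_of_pos_of_nonneg (hc i) (hc1 i))]; linarith [hc i]
    have hQ0 : 0 ≤ occ T w ρ := div_nonneg hZ1 (by linarith)
    have hQ1 : occ T w ρ ≤ 1 := by rw [occ, div_le_one (by linarith)]; linarith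
    rw [totInf_formula hl D hw h0 h1]
    refine (holder_step hd hb1 hr0 hr1 _ _ (fun i => distBranching (D.G i) d (D.c i)) _ hQ0 hQ1 hq0
      (fun i => hBnn _ _ _) (hcon _ _ _ hq0 hq1 (occ_formula hl D hw h0 h1)) fun i => ?_).trans ?_
    · exact ih _ _ _ _ (hcard i) (D.tree i) (hw.res D i) (hc i)
    · refine mul_le_mul_of_nonneg_left (Real.rpow_le_rpow ?_ (distBranching_split D hd) hβ) hC0.le
      exact add_nonneg zero_le_one (mul_nonneg (by positivity)
        (Finset.sum_nonneg fun i _ => hBnn _ _ _))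

/-- An unpinned root with at most `k` children is occupied with probability bounded below. -/
lemma occ_lower {lam : ℝ} (hl : 0 < lam) {V : Type} [Fintype V] {T : SimpleGraph V} {ρ : V}
    (D : RootSplit T ρ) {w : V → Bool → ℝ} (hw : Admissible lam w) (h0 : 0 < Zr T w ρ false)
    (h1 : 0 < Zr T w ρ true) {k : ℕ} (hk : Fintype.card D.ι ≤ k) :
    lam * (1 + lam)⁻¹ ^ (k + 1) ≤ occ T w ρ := by
  have hc := child_pos hl D hw h1
  have hc1 := fun i => Zr_nonneg ((hw.res D i).nonneg hl) (D.c i) true (G := D.G i)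
  have hi1 : (1 + lam)⁻¹ ≤ 1 := inv_le_one_of_one_le₀ (by linarith)
  have hi0 : 0 < (1 + lam)⁻¹ := by positivity
  have hbd : ∀ i, (1 + lam)⁻¹ ≤ 1 - occ (D.G i) (D.res w i) (D.c i) := by
    intro i
    obtain ⟨D'⟩ := nonempty_rootSplit (D.G i) (D.tree i) (D.c i)
    have := Zr_le hl D' (hw.res D i) (hc i)
    rw [one_sub_occ (hc i) (hc1 i), inv_eq_one_div, div_le_div_iff₀ (by positivity)
      (add_pos_of_pos_of_nonneg (hc i) (hc1 i))]
    linarith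
  have hle1 : ∀ i, 1 - occ (D.G i) (D.res w i) (D.c i) ≤ 1 := fun i => by
    have : 0 ≤ occ (D.G i) (D.res w i) (D.c i) :=
      div_nonneg (hc1 i) (add_nonneg (hc i).le (hc1 i))
    linarith
  rw [occ_formula hl D hw h0 h1]
  set P := ∏ i, (1 - occ (D.G i) (D.res w i) (D.c i)) with hP
  have hP1 : P ≤ 1 := Finset.prod_le_one (fun i _ => hi0.le.trans (hbd i)) fun i _ => hle1 i
  have hPk : (1 + lam)⁻¹ ^ k ≤ P := by
    calc (1 + lam)⁻¹ ^ k ≤ (1 + lam)⁻¹ ^ Fintype.card D.ι :=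
          pow_le_pow_of_le_one hi0.le hi1 hk
      _ = ∏ _i : D.ι, (1 + lam)⁻¹ := by simp
      _ ≤ P := Finset.prod_le_prod (fun i _ => hi0.le) fun i _ => hbd i
  have hP0 : 0 < P := (pow_pos hi0 k).trans_le hPk
  calc lam * (1 + lam)⁻¹ ^ (k + 1) = lam * (1 + lam)⁻¹ ^ k / (1 + lam) := by
        rw [pow_succ]; field_simp
    _ ≤ lam * P / (1 + lam * P) := by
        have : lam * P ≤ lam := mul_le_of_le_one_right hl.le hP1
        gcongr

lemma card_children_le {V : Type} [Fintype V] {T : SimpleGraph V} {ρ : V} (D : RootSplit T ρ) :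
    Fintype.card D.ι ≤ deg T ρ := by
  rw [deg, ← Nat.card_eq_fintype_card]
  refine Nat.card_le_card_of_injective
    (fun i => (⟨D.e (some ⟨i, D.c i⟩), (D.adj_root i _).2 rfl⟩ : {u // T.Adj ρ u})) ?_
  intro i j hij
  have := congrArg Subtype.val hij
  simp only [EmbeddingLike.apply_eq_iff_eq, Option.some.injEq, Sigma.mk.injEq] at this
  exact this.1

/-- Each vertex is the endpoint of a geodesic from `ρ`, which is one of the counted paths. -/
lemma distBranching_le {V : Type} [Fintype V] {T : SimpleGraph V} (hT : T.Connected) (ρ : V)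
    {d : ℝ} (hd : 1 < d) : distBranching T d ρ ≤ branchingValue T d ρ := by
  have hd0 : 0 < d := by linarith
  have hfin : ∀ ℓ, Finite {p : (u : V) × T.Walk ρ u // p.2.IsPath ∧ p.2.length = ℓ} := by
    intro ℓ
    refine Finite.of_injective
      (β := Σ u : V, {p : T.Walk ρ u // p.IsPath ∧ p.length = ℓ})
      (fun p => ⟨p.1.1, p.1.2, p.2⟩) ?_
    rintro ⟨⟨u, p⟩, hp⟩ ⟨⟨v, q⟩, hq⟩ h
    simp only [Sigma.mk.injEq] at h
    obtain ⟨rfl, h⟩ := h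
    simp only [heq_eq_eq, Subtype.mk.injEq] at h
    subst h
    rfl
  have hzero : ∀ ℓ, ℓ ∉ Finset.range (Fintype.card V) → (numPaths T ρ ℓ : ℝ) / d ^ ℓ = 0 := by
    intro ℓ hℓ
    have : IsEmpty {p : (u : V) × T.Walk ρ u // p.2.IsPath ∧ p.2.length = ℓ} := by
      refine ⟨fun p => hℓ ?_⟩
      have := p.2.1.length_lt
      rw [p.2.2] at this
      exact Finset.mem_range.2 this
    rw [numPaths, Nat.card_of_isEmpty]; simp
  rw [branchingValue, tsum_eq_sum hzero, distBranching]
  have hmaps : ∀ x ∈ (Finset.univ : Finset V), T.dist ρ x ∈ Finset.range (Fintype.card V) := by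
    intro x _
    obtain ⟨p, hp, hl⟩ := hT.exists_path_of_dist ρ x
    rw [← hl]; exact Finset.mem_range.2 hp.length_lt
  rw [← Finset.sum_fiberwise_of_maps_to hmaps]
  refine Finset.sum_le_sum fun ℓ _ => ?_
  rw [Finset.sum_congr rfl (g := fun _ => d⁻¹ ^ ℓ)
    (fun x hx => by rw [(Finset.mem_filter.1 hx).2]), Finset.sum_const, nsmul_eq_mul, inv_pow,
    ← div_eq_mul_inv]
  gcongr
  rw [numPaths, ← Fintype.card_coe, ← Nat.card_eq_fintype_card]
  choose p hp hl using fun x => hT.exists_path_of_dist ρ x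
  refine Nat.card_le_card_of_injective (fun x => ⟨⟨x.1, p x.1⟩, hp _,
    (hl _).trans (Finset.mem_filter.1 x.2).2⟩) ?_
  intro x y hxy
  have := congrArg (fun z => z.1.1) hxy
  exact Subtype.ext this

/-! ### Translation to conditional probabilities -/

/-- Spin weights encoding fugacity `lam` and the pinning `τ` on `S`. -/
noncomputable def pinW {V : Type} (lam : ℝ) (S : Set V) (τ : V → Bool) (v : V) (i : Bool) : ℝ :=
  if v ∈ S ∧ i ≠ τ v then 0 else if i = true then lam else 1

lemma pinW_admissible {V : Type} (lam : ℝ) (S : Set V) (τ : V → Bool) :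
    Admissible lam (pinW lam S τ) := by
  intro v
  constructor <;> unfold pinW <;> split_ifs <;> simp_all

lemma wt_pinW {V : Type} [Fintype V] (T : SimpleGraph V) (lam : ℝ) (S : Set V) (τ : V → Bool)
    (σ : V → Bool) :
    wt T (pinW lam S τ) σ = if σ ∈ eventEq S τ then hcWeight T lam σ else 0 := by
  unfold wt hcWeight
  by_cases h : σ ∈ eventEq S τ
  · rw [if_pos h]
    refine if_congr Iff.rfl ?_ rfl
    rw [Finset.prod_congr rfl (g := fun v => if σ v = true then lam else 1), Finset.prod_ite]
    · simp
    · intro v _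
      have : ¬(v ∈ S ∧ σ v ≠ τ v) := fun hv => hv.2 (h v hv.1)
      rw [pinW, if_neg this]
  · rw [if_neg h]
    have : ∃ v ∈ S, σ v ≠ τ v := by
      by_contra! hc
      exact h hc
    obtain ⟨v, hv, hne⟩ := this
    rw [Finset.prod_eq_zero (Finset.mem_univ v) (by rw [pinW, if_pos ⟨hv, hne⟩]), ite_self]

section Bridge

variable {V : Type} [Fintype V] (T : SimpleGraph V) (lam : ℝ) (S : Set V) (τ : V → Bool)

lemma pr_root (ρ : V) (b : Bool) :
    pr (hardCore T lam) (eventEq S τ ∩ eventVal ρ b)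
      = Zr T (pinW lam S τ) ρ b / ∑ σ', hcWeight T lam σ' := by
  rw [pr, Zr, Finset.sum_div]
  refine Finset.sum_congr rfl fun σ _ => ?_
  rw [wt_pinW, hardCore]
  by_cases h1 : σ ∈ eventEq S τ <;> by_cases h2 : σ ρ = b <;> simp [h1, h2, eventVal]

lemma pr_marked (ρ x : V) (b : Bool) :
    pr (hardCore T lam) (eventVal x true ∩ (eventEq S τ ∩ eventVal ρ b))
      = Mr T (pinW lam S τ) ρ b x / ∑ σ', hcWeight T lam σ' := by
  rw [pr, Mr, Finset.sum_div]
  refine Finset.sum_congr rfl fun σ _ => ?_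
  rw [wt_pinW, hardCore]
  by_cases h1 : σ ∈ eventEq S τ <;> by_cases h2 : σ ρ = b <;> by_cases h3 : σ x = true <;>
    simp [h1, h2, h3, eventVal]

lemma pr_eventEq (ρ : V) :
    pr (hardCore T lam) (eventEq S τ)
      = (Zr T (pinW lam S τ) ρ false + Zr T (pinW lam S τ) ρ true)
        / ∑ σ', hcWeight T lam σ' := by
  rw [add_div, ← pr_root, ← pr_root, pr, pr, pr, ← Finset.sum_add_distrib]
  refine Finset.sum_congr rfl fun σ _ => ?_
  by_cases h1 : σ ∈ eventEq S τ <;> cases h2 : σ ρ <;> simp [h1, h2, eventVal]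

end Bridge

/-- total influence of the root of a tree, for the hard-core model,
is bounded by `W_k · α^{1/χ}` where `α` bounds the `d`-branching value of the root
and `k` is the number of children of the root. -/
theorem stmt1 (d lam : ℝ) (hd : 1 < d) (hlam : 0 < lam) (hcrit : lam < lamc d) :
    ∃ χ : ℝ, 1 < χ ∧
      ∀ k : ℕ, 1 ≤ k → ∃ W : ℝ, 0 < W ∧
        ∀ (V : Type) [Fintype V] (T : SimpleGraph V) (ρ : V) (α : ℝ),
          T.IsTree → branchingValue T d ρ ≤ α → deg T ρ = k →
          ∀ (S : Set V) (τ : V → Bool), ρ ∉ S →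
            0 < pr (hardCore T lam) (eventEq S τ) →
            0 < cpr (hardCore T lam) (eventVal ρ true) (eventEq S τ) →
            cpr (hardCore T lam) (eventVal ρ true) (eventEq S τ) < 1 →
            ∑ v : V, |influence (hardCore T lam) S τ ρ v| ≤ W * α ^ (1 / χ) := by
  obtain ⟨b, r, hb1, hr0, hr1, hcon⟩ := contraction d lam hd hlam hcrit
  have hsr : √r < 1 := by rw [Real.sqrt_lt' one_pos]; simpa using hr1
  have hC0 : 0 < (1 - √r)⁻¹ := by rw [inv_pos]; linarith
  -- `χ` is the conjugate exponent of `2 b`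
  have hχ : 1 / (2 * b / (2 * b - 1)) = 1 - 1 / (2 * b) := by
    have : 2 * b - 1 ≠ 0 := by linarith
    field_simp
  refine ⟨2 * b / (2 * b - 1), by rw [lt_div_iff₀ (by linarith)]; linarith, fun k _ => ?_⟩
  rw [hχ]
  set β := 1 - 1 / (2 * b) with hβd
  have hβ : 0 ≤ β := by
    rw [hβd, sub_nonneg, div_le_one (by positivity)]; linarith
  set m := lam * (1 + lam)⁻¹ ^ (k + 1) with hm
  have hm0 : 0 < m := by positivity
  refine ⟨(1 - √r)⁻¹ / √m, by positivity, ?_⟩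
  intro V _ T ρ α hT hα hdeg S τ _ hpos h1 h2
  set w := pinW lam S τ with hw
  have hadm : Admissible lam w := pinW_admissible lam S τ
  set Z := ∑ σ', hcWeight T lam σ' with hZ
  have hZ0 : Z ≠ 0 := by
    intro h
    rw [pr_eventEq T lam S τ ρ, ← hZ, h, div_zero] at hpos
    exact lt_irrefl _ hpos
  have hz0 := Zr_nonneg (hadm.nonneg hlam) ρ false (G := T)
  have hz1 := Zr_nonneg (hadm.nonneg hlam) ρ true (G := T)
  have hocc : cpr (hardCore T lam) (eventVal ρ true) (eventEq S τ) = occ T w ρ := by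
    rw [cpr, Set.inter_comm, pr_root, pr_eventEq T lam S τ ρ, div_div_div_cancel_right₀ hZ0, occ]
  rw [hocc] at h1 h2
  have hZ1 : 0 < Zr T w ρ true := by
    refine hz1.lt_of_ne fun h => ?_
    rw [occ, ← h, zero_div] at h1; exact lt_irrefl _ h1
  have hZf : 0 < Zr T w ρ false := by
    refine hz0.lt_of_ne fun h => ?_
    rw [occ, ← h, zero_add, div_self hZ1.ne'] at h2; exact lt_irrefl _ h2
  have hinf : ∑ v : V, |influence (hardCore T lam) S τ ρ v| = totInf T w ρ := by
    refine Finset.sum_congr rfl fun x _ => ?_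
    rw [influence, cpr, cpr, pr_marked, pr_marked, pr_root, pr_root,
      div_div_div_cancel_right₀ hZ0, div_div_div_cancel_right₀ hZ0]
  rw [hinf]
  obtain ⟨D⟩ := nonempty_rootSplit T hT ρ
  have hlow := occ_lower hlam D hadm hZf hZ1 (hdeg ▸ card_children_le D)
  have hmain := main_induction hd hlam hb1 hr0 hr1 hcon _ V T ρ w le_rfl hT hadm hZf
  have hB0 : 0 ≤ distBranching T d ρ :=
    Finset.sum_nonneg fun x _ => by have : 0 < d := by linarith
                                    positivity
  have hBα : distBranching T d ρ ^ β ≤ α ^ β :=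
    Real.rpow_le_rpow hB0 ((distBranching_le hT.connected ρ hd).trans hα) hβ
  have hJ0 : 0 ≤ totInf T w ρ := Finset.sum_nonneg fun x _ => abs_nonneg _
  rw [div_mul_eq_mul_div, le_div_iff₀ (Real.sqrt_pos.2 hm0), mul_comm]
  calc √m * totInf T w ρ ≤ √(occ T w ρ) * totInf T w ρ :=
        mul_le_mul_of_nonneg_right (Real.sqrt_le_sqrt hlow) hJ0
    _ ≤ _ := hmain
    _ ≤ _ := mul_le_mul_of_nonneg_left hBα hC0.le
end
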